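/- Let 0 < α < 2, d ≥ 1, D = {x ∈ ℝ^d : x_d > 0}, and let A_{d,−α} = Γ((d+α)/2) / (2^{−α} π^{d/2} |Γ(−α/2)|). For every smooth compactly supported function u : ℝ^d → ℝ with support contained in D, (1/2)·A_{d,−α} ∫_{ℝ^d} ∫_{ℝ^d} (u(x) − u(y))² / |x − y|^{d+α} dx dy ≥ [Γ((1+α)/2)² / π] ∫_D u(x)² x_d^{−α} dx. -/

import Mathlib

open MeasureTheory Real Set

/-- The open upper half-space in `ℝ^{d+1}`. -/
def halfSpace (d : ℕ) : Set (EuclideanSpace ℝ (Fin (d + 1))) :=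
  {x | 0 < x (Fin.last d)}

/-- The normalizing constant `A_{d,-α}` of the fractional Laplacian in dimension `d`. -/
noncomputable def fracLapConst (d : ℕ) (α : ℝ) : ℝ :=
  Real.Gamma (((d : ℝ) + α) / 2) / (2 ^ (-α) * Real.pi ^ ((d : ℝ) / 2) * |Real.Gamma (-α / 2)|)

/-! Write `X` and `Y` for the heights of `x` and `y`. For every `r > 0`,
`(a - b) ^ 2 = a ^ 2 * (1 - r) + b ^ 2 * (1 - r⁻¹) + (a * r - b) ^ 2 / r`, and dropping the last
square with `a = u x`, `b = u y` and `r = w Y / w X` is the ground state substitution. The profile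
`w t = t ^ ((α - 1) / 2)` gives the best constant: under `s ↦ s⁻¹` for the ratio `s = Y / X`, the
potentials add up to the square `(1 - s ^ ((α - 1) / 2)) ^ 2` against the kernel.

The separate terms are not integrable near `s = 1`, so the substitution is made only for ratios
outside `[δ, δ⁻¹]`, where all moments are finite and the ground state terms cancel; then `δ → 1`.
Integration over the other coordinates, by Gaussian subordination, reduces the kernel to the
one-dimensional one, and an integration by parts turns the remaining integral into a beta
integral. -/

open Filter Topology Module
open scoped ENNReal NNReal

section GaussianSubordination

lemma lintegral_rpow_mul_exp_neg_mul_Ioi {a r : ℝ} (ha : 0 < a) (hr : 0 < r) :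
    ∫⁻ t in Ioi (0 : ℝ), ENNReal.ofReal (t ^ (a - 1) * exp (-(r * t))) =
      ENNReal.ofReal ((1 / r) ^ a * Gamma a) := by
  have := Gamma_pos_of_pos ha
  have hint := integral_rpow_mul_exp_neg_mul_Ioi ha hr
  rw [← hint, ofReal_integral_eq_lintegral_ofReal]
  · exact .of_integral_ne_zero (by rw [hint]; positivity)
  · filter_upwards [ae_restrict_mem measurableSet_Ioi] with t (ht : 0 < t)
    positivity

lemma ofReal_add_rpow_neg {A β : ℝ} (hA : 0 < A) (hβ : 0 < β) {x : ℝ} (hx : 0 ≤ x) :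
    ENNReal.ofReal ((A + x) ^ (-β)) =
      ∫⁻ t in Ioi (0 : ℝ), ENNReal.ofReal ((Gamma β)⁻¹ * (t ^ (β - 1) * exp (-(A * t)))) *
        ENNReal.ofReal (exp (-t * x)) := by
  have hr : 0 < A + x := by positivity
  have := Gamma_pos_of_pos hβ
  have hsplit : ∀ t ∈ Ioi (0 : ℝ),
      ENNReal.ofReal ((Gamma β)⁻¹ * (t ^ (β - 1) * exp (-(A * t)))) *
        ENNReal.ofReal (exp (-t * x)) =
      ENNReal.ofReal (Gamma β)⁻¹ *
        ENNReal.ofReal (t ^ (β - 1) * exp (-((A + x) * t))) := by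
    intro t (ht : 0 < t)
    rw [← ENNReal.ofReal_mul (by positivity), ← ENNReal.ofReal_mul (by positivity),
      show -((A + x) * t) = -(A * t) + -t * x by ring, exp_add]
    ring_nf
  rw [setLIntegral_congr_fun measurableSet_Ioi hsplit,
    lintegral_const_mul' _ _ ENNReal.ofReal_ne_top, lintegral_rpow_mul_exp_neg_mul_Ioi hβ hr,
    ← ENNReal.ofReal_mul (by positivity), one_div, inv_rpow hr.le, rpow_neg hr.le]
  field_simp

variable {V : Type*} [NormedAddCommGroup V] [InnerProductSpace ℝ V] [FiniteDimensional ℝ V]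
  [MeasurableSpace V] [BorelSpace V]

lemma lintegral_exp_neg_mul_sq_norm {b : ℝ} (hb : 0 < b) :
    ∫⁻ v : V, ENNReal.ofReal (exp (-b * ‖v‖ ^ 2)) =
      ENNReal.ofReal ((π / b) ^ (finrank ℝ V / 2 : ℝ)) := by
  have hint := GaussianFourier.integral_rexp_neg_mul_sq_norm (V := V) hb
  rw [← hint, ofReal_integral_eq_lintegral_ofReal]
  · exact .of_integral_ne_zero (by rw [hint]; positivity)
  · exact ae_of_all _ fun v => (exp_pos _).le

lemma lintegral_add_sq_norm_rpow_neg {A β : ℝ} (hA : 0 < A) (hβ : (finrank ℝ V / 2 : ℝ) < β) :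
    ∫⁻ v : V, ENNReal.ofReal ((A + ‖v‖ ^ 2) ^ (-β)) =
      ENNReal.ofReal (π ^ (finrank ℝ V / 2 : ℝ) * Gamma (β - finrank ℝ V / 2) / Gamma β *
        A ^ (finrank ℝ V / 2 - β)) := by
  set n : ℝ := finrank ℝ V / 2 with hn
  have hβ0 : 0 < β := lt_of_le_of_lt (by positivity) hβ
  have := Gamma_pos_of_pos hβ0
  have := Gamma_pos_of_pos (sub_pos.2 hβ)
  have hgauss : ∀ t ∈ Ioi (0 : ℝ), ∫⁻ v : V,
      ENNReal.ofReal ((Gamma β)⁻¹ * (t ^ (β - 1) * exp (-(A * t)))) *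
        ENNReal.ofReal (exp (-t * ‖v‖ ^ 2)) =
      ENNReal.ofReal (π ^ n / Gamma β) *
        ENNReal.ofReal (t ^ (β - n - 1) * exp (-(A * t))) := by
    intro t (ht : 0 < t)
    rw [lintegral_const_mul' _ _ ENNReal.ofReal_ne_top, lintegral_exp_neg_mul_sq_norm ht, ← hn,
      ← ENNReal.ofReal_mul (by positivity), ← ENNReal.ofReal_mul (by positivity),
      show β - 1 = β - n - 1 + n by ring, rpow_add ht, div_rpow pi_pos.le ht.le]
    field_simp
  simp_rw [ofReal_add_rpow_neg hA hβ0 (sq_nonneg ‖_‖)]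
  rw [lintegral_lintegral_swap (by unfold Function.uncurry; fun_prop),
    setLIntegral_congr_fun measurableSet_Ioi hgauss,
    lintegral_const_mul' _ _ ENNReal.ofReal_ne_top,
    lintegral_rpow_mul_exp_neg_mul_Ioi (sub_pos.2 hβ) hA, ← ENNReal.ofReal_mul (by positivity),
    one_div, inv_rpow hA.le, ← rpow_neg hA.le, neg_sub]
  ring_nf

end GaussianSubordination

section RatioMoments

/-- The moment of order `q` over `S` of the one-dimensional fractional kernel seen from the point
`1`; the variable `s` stands for the ratio of the heights of two points. -/
noncomputable def ratioMoment (α q : ℝ) (S : Set ℝ) : ℝ≥0∞ :=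
  ∫⁻ s in S, ENNReal.ofReal (s ^ q * |1 - s| ^ (-(1 + α)))

variable {α q δ : ℝ}

lemma lintegral_comp_div_mul_abs_sub_rpow {h : ℝ → ℝ≥0∞} (hh : Measurable h) (α : ℝ) {X : ℝ}
    (hX : 0 < X) :
    ∫⁻ t, h (t / X) * ENNReal.ofReal (|X - t| ^ (-(1 + α))) =
      ENNReal.ofReal (X ^ (-α)) * ∫⁻ s, h s * ENNReal.ofReal (|1 - s| ^ (-(1 + α))) := by
  have hscale : ∀ s : ℝ, ENNReal.ofReal X * ENNReal.ofReal (|X - X * s| ^ (-(1 + α))) =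
      ENNReal.ofReal (X ^ (-α)) * ENNReal.ofReal (|1 - s| ^ (-(1 + α))) := by
    intro s
    rw [← ENNReal.ofReal_mul hX.le, ← ENNReal.ofReal_mul (by positivity), ← mul_one_sub, abs_mul,
      abs_of_pos hX, mul_rpow hX.le (abs_nonneg _), ← mul_assoc, show -α = 1 + -(1 + α) by ring,
      rpow_add hX, rpow_one]
  conv_lhs => rw [← Real.smul_map_volume_mul_left hX.ne']
  rw [lintegral_smul_measure, lintegral_map (by fun_prop) (by fun_prop), abs_of_pos hX, smul_eq_mul,
    ← lintegral_const_mul _ (by fun_prop), ← lintegral_const_mul _ (by fun_prop)]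
  refine lintegral_congr fun s => ?_
  rw [mul_div_cancel_left₀ _ hX.ne', mul_left_comm, hscale, mul_left_comm]

lemma ratioMoment_zero_Iic (hα : 0 < α) : ratioMoment α 0 (Iic 0) = ENNReal.ofReal (1 / α) := by
  have hint := integral_Ioi_rpow_of_lt (a := -(1 + α)) (by linarith) one_pos
  have hval : -(1 : ℝ) ^ (-(1 + α) + 1) / (-(1 + α) + 1) = 1 / α := by
    rw [one_rpow, neg_add_rev, neg_add_cancel_right, neg_div_neg_eq]
  rw [hval] at hint
  have hreflect : ratioMoment α 0 (Iic 0) =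
      ∫⁻ r in Ioi 1, ENNReal.ofReal (r ^ (-(1 + α))) := by
    rw [ratioMoment, setLIntegral_congr Iio_ae_eq_Iic.symm, ← lintegral_indicator measurableSet_Iio,
      ← lintegral_indicator measurableSet_Ioi, ← lintegral_sub_left_eq_self _ 1]
    refine lintegral_congr fun s => ?_
    simp only [indicator, mem_Iio, mem_Ioi, sub_neg]
    split_ifs with h
    · rw [rpow_zero, one_mul, sub_sub_cancel, abs_of_pos (one_pos.trans h)]
    · rfl
  rw [hreflect, ← hint, ofReal_integral_eq_lintegral_ofReal]
  · exact integrableOn_Ioi_rpow_of_lt (by linarith) one_pos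
  · filter_upwards [ae_restrict_mem measurableSet_Ioi] with r (hr : 1 < r)
    positivity

lemma ratioMoment_Ioi_inv (hδ0 : 0 < δ) (hδ1 : δ ≤ 1) :
    ratioMoment α q (Ioi δ⁻¹) =
      ∫⁻ s in Ioo 0 δ, ENNReal.ofReal (s ^ (α - 1 - q) * (1 - s) ^ (-(1 + α))) := by
  have himage : Inv.inv '' Ioo 0 δ = Ioi δ⁻¹ := by rw [image_inv_eq_inv, inv_Ioo_0_left hδ0]
  rw [ratioMoment, ← himage, lintegral_image_eq_lintegral_abs_deriv_mul measurableSet_Ioo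
    (fun s hs => (hasDerivAt_inv hs.1.ne').hasDerivWithinAt) inv_injective.injOn]
  refine setLIntegral_congr_fun measurableSet_Ioo fun s ⟨hs0, hsδ⟩ => ?_
  have h1s : 0 < 1 - s := by linarith
  have hdist : |1 - s⁻¹| = (1 - s) / s := by
    rw [abs_sub_comm, abs_of_pos (sub_pos.2 (one_lt_inv₀ hs0 |>.2 (by linarith)))]
    field_simp
  rw [hdist, abs_neg, abs_of_pos (by positivity), ← ENNReal.ofReal_mul (by positivity),
    div_rpow h1s.le hs0.le, inv_rpow hs0.le, ← rpow_neg hs0.le, rpow_neg hs0.le (1 + α),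
    show α - 1 - q = 1 + α + -q - (2 : ℕ) by push_cast; ring, rpow_sub_natCast hs0.ne',
    rpow_add hs0 (1 + α)]
  field_simp

lemma ratioMoment_Ioo_zero (hδ1 : δ ≤ 1) :
    ratioMoment α q (Ioo 0 δ) =
      ∫⁻ s in Ioo 0 δ, ENNReal.ofReal (s ^ q * (1 - s) ^ (-(1 + α))) :=
  setLIntegral_congr_fun measurableSet_Ioo fun s hs => by
    simp only [abs_of_pos (show 0 < 1 - s by linarith [hs.2])]

lemma ratioMoment_Ioo_union_Ioi_inv (hδ0 : 0 < δ) (hδ1 : δ ≤ 1) :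
    ratioMoment α q (Ioo 0 δ ∪ Ioi δ⁻¹) =
      ∫⁻ s in Ioo 0 δ, ENNReal.ofReal ((s ^ q + s ^ (α - 1 - q)) * (1 - s) ^ (-(1 + α))) := by
  have hdisj : Disjoint (Ioo 0 δ) (Ioi δ⁻¹) := by
    refine disjoint_left.2 fun s hs hs' => ?_
    linarith [hs.2, mem_Ioi.1 hs', (one_le_inv₀ hδ0).2 hδ1]
  have hunion : ratioMoment α q (Ioo 0 δ ∪ Ioi δ⁻¹) =
      ratioMoment α q (Ioo 0 δ) + ratioMoment α q (Ioi δ⁻¹) :=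
    lintegral_union measurableSet_Ioi hdisj
  rw [hunion, ratioMoment_Ioo_zero hδ1, ratioMoment_Ioi_inv hδ0 hδ1,
    ← lintegral_add_left (by fun_prop)]
  refine setLIntegral_congr_fun measurableSet_Ioo fun s ⟨hs0, hsδ⟩ => ?_
  have h1s : 0 < 1 - s := by linarith
  rw [← ENNReal.ofReal_add (by positivity) (by positivity), add_mul]

lemma ratioMoment_Ioo_union_Ioi_inv_ne_top (hq : -1 < q) (hqα : q < α) (hδ0 : 0 < δ)
    (hδ1 : δ < 1) : ratioMoment α q (Ioo 0 δ ∪ Ioi δ⁻¹) ≠ ∞ := by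
  have hpow : IntervalIntegrable (fun s : ℝ => s ^ q + s ^ (α - 1 - q)) volume 0 δ :=
    (intervalIntegral.intervalIntegrable_rpow' hq).add
      (intervalIntegral.intervalIntegrable_rpow' (by linarith))
  have hcont : ContinuousOn (fun s : ℝ => (1 - s) ^ (-(1 + α))) (uIcc 0 δ) := fun s hs => by
    rw [uIcc_of_le hδ0.le] at hs
    exact ContinuousAt.continuousWithinAt <| ContinuousAt.rpow_const (by fun_prop)
      (Or.inl (by linarith [hs.2]))
  rw [ratioMoment_Ioo_union_Ioi_inv hδ0 hδ1.le]
  exact ((intervalIntegrable_iff_integrableOn_Ioo_of_le hδ0.le).1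
    (hpow.mul_continuousOn hcont)).lintegral_lt_top.ne

/-- The density on `(0, 1)` by which the moment of the constant profile exceeds that of the ground
state `t ^ ((α - 1) / 2)` once the ratios `s` and `s⁻¹` are paired. -/
noncomputable def groundStateDefect (α s : ℝ) : ℝ :=
  (1 - s ^ ((α - 1) / 2)) ^ 2 * (1 - s) ^ (-(1 + α))

lemma groundStateDefect_nonneg {s : ℝ} (hs : s ≤ 1) : 0 ≤ groundStateDefect α s :=
  mul_nonneg (sq_nonneg _) (rpow_nonneg (sub_nonneg.2 hs) _)

lemma ratioMoment_zero_eq_add_groundStateDefect (hα : 0 < α) (hδ0 : 0 < δ) (hδ1 : δ ≤ 1) :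
    ratioMoment α 0 (Iio δ ∪ Ioi δ⁻¹) =
      ratioMoment α ((α - 1) / 2) (Ioo 0 δ ∪ Ioi δ⁻¹) + (ENNReal.ofReal (1 / α) +
        ∫⁻ s in Ioo 0 δ, ENNReal.ofReal (groundStateDefect α s)) := by
  have hsplit : Iio δ ∪ Ioi δ⁻¹ = Iic 0 ∪ (Ioo 0 δ ∪ Ioi δ⁻¹) := by
    rw [← union_assoc, Iic_union_Ioo_eq_Iio hδ0]
  have hdisj : Disjoint (Iic 0) (Ioo 0 δ ∪ Ioi δ⁻¹) := by
    refine disjoint_left.2 fun s (hs : s ≤ 0) hs' => hs.not_gt ?_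
    exact hs'.elim And.left (inv_pos.2 hδ0).trans
  have hunion : ratioMoment α 0 (Iio δ ∪ Ioi δ⁻¹) =
      ratioMoment α 0 (Iic 0) + ratioMoment α 0 (Ioo 0 δ ∪ Ioi δ⁻¹) := by
    rw [hsplit]
    exact lintegral_union (measurableSet_Ioo.union measurableSet_Ioi) hdisj
  have hsquare : ratioMoment α 0 (Ioo 0 δ ∪ Ioi δ⁻¹) =
      ratioMoment α ((α - 1) / 2) (Ioo 0 δ ∪ Ioi δ⁻¹) +
        ∫⁻ s in Ioo 0 δ, ENNReal.ofReal (groundStateDefect α s) := by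
    rw [ratioMoment_Ioo_union_Ioi_inv hδ0 hδ1, ratioMoment_Ioo_union_Ioi_inv hδ0 hδ1,
      ← lintegral_add_left (by fun_prop)]
    refine setLIntegral_congr_fun measurableSet_Ioo fun s ⟨hs0, hsδ⟩ => ?_
    have h1s : 0 < 1 - s := by linarith
    rw [← ENNReal.ofReal_add (by positivity) (groundStateDefect_nonneg (by linarith)),
      groundStateDefect, show α - 1 - (α - 1) / 2 = (α - 1) / 2 by ring, rpow_zero, sub_zero,
      show α - 1 = (α - 1) / 2 + (α - 1) / 2 by ring, rpow_add hs0]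
    ring_nf
  rw [hunion, hsquare, ratioMoment_zero_Iic hα, add_left_comm]

end RatioMoments

section HalfLineConstant

/-- The constant of the one-dimensional Hardy inequality produced by the ground state
`t ^ ((α - 1) / 2)`; the term `1 / α` is the contribution of the complement of the half-line. -/
noncomputable def halfLineConst (α : ℝ) : ℝ :=
  1 / α + ∫ s in (0 : ℝ)..1, groundStateDefect α s

/-- The boundary term of the integration by parts that reduces `halfLineConst` to a beta
integral. -/
noncomputable def halfLineBoundary (α s : ℝ) : ℝ :=
  (1 - s) ^ (-α) * (1 + s ^ α - (3 - s) * s ^ ((1 + α) / 2))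

variable {α : ℝ}

lemma integral_rpow_mul_one_sub_rpow {a b : ℝ} (ha : 0 < a) (hb : 0 < b) :
    ∫ s in (0 : ℝ)..1, s ^ (a - 1) * (1 - s) ^ (b - 1) = ProbabilityTheory.beta a b := by
  have hcast : Complex.betaIntegral a b =
      ∫ s in (0 : ℝ)..1, ((s ^ (a - 1) * (1 - s) ^ (b - 1) : ℝ) : ℂ) := by
    refine intervalIntegral.integral_congr fun s hs => ?_
    rw [uIcc_of_le zero_le_one] at hs
    simp only [Complex.ofReal_mul, Complex.ofReal_cpow hs.1,
      Complex.ofReal_cpow (sub_nonneg.2 hs.2), Complex.ofReal_sub, Complex.ofReal_one]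
  rw [ProbabilityTheory.beta_eq_betaIntegralReal a b ha hb, hcast, intervalIntegral.integral_ofReal,
    Complex.ofReal_re]

lemma hasDerivAt_halfLineBoundary {s : ℝ} (hs0 : 0 < s) (hs1 : s < 1) :
    HasDerivAt (halfLineBoundary α)
      (α * groundStateDefect α s -
        (3 - α) / 2 * (s ^ ((α - 1) / 2) * (1 - s) ^ (1 - α))) s := by
  have h1s : 0 < 1 - s := sub_pos.2 hs1
  have hpow (p : ℝ) : HasDerivAt (fun s : ℝ => s ^ p) (1 * p * s ^ (p - 1)) s :=
    (hasDerivAt_id s).rpow_const (Or.inl hs0.ne')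
  have hpow' : HasDerivAt (fun s : ℝ => (1 - s) ^ (-α)) (-1 * -α * (1 - s) ^ (-α - 1)) s :=
    ((hasDerivAt_id s).const_sub 1).rpow_const (Or.inl h1s.ne')
  refine (hpow'.mul (((hpow α).const_add 1).sub
    (((hasDerivAt_id s).const_sub 3).mul (hpow ((1 + α) / 2))))).congr_deriv ?_
  simp only [groundStateDefect, Pi.sub_apply, Pi.mul_apply, id]
  have hsq : s ^ (α - 1) = s ^ ((α - 1) / 2) * s ^ ((α - 1) / 2) := by
    rw [← rpow_add hs0, add_halves]
  have hsq_mul : s ^ α = s ^ ((α - 1) / 2) * s ^ ((α - 1) / 2) * s := by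
    rw [← hsq, ← rpow_add_one hs0.ne', sub_add_cancel]
  rw [hsq, hsq_mul, show -α - 1 = -(1 + α) by ring, show -α = -(1 + α) + 1 by ring,
    show 1 - α = -(1 + α) + 1 + 1 by ring, show (1 + α) / 2 - 1 = (α - 1) / 2 by ring,
    show (1 + α) / 2 = (α - 1) / 2 + 1 by ring]
  simp only [rpow_add_one h1s.ne', rpow_add_one hs0.ne']
  ring

lemma halfLineBoundary_eq_slope {s : ℝ} (hs0 : 0 < s) (hs1 : s < 1) :
    halfLineBoundary α s = (1 - s) ^ (2 - α) *
      (s * slope (fun t : ℝ => t ^ ((α - 1) / 2)) 1 s ^ 2 +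
        slope (fun t : ℝ => t ^ ((1 + α) / 2)) 1 s) := by
  have h1s : 1 - s ≠ 0 := (sub_pos.2 hs1).ne'
  have hs1' : s - 1 ≠ 0 := (sub_neg.2 hs1).ne
  rw [halfLineBoundary, slope_def_field, slope_def_field, one_rpow, one_rpow,
    show 2 - α = -α + (2 : ℕ) by push_cast; ring, rpow_add_natCast h1s,
    show s ^ α = s ^ ((α - 1) / 2 + (α - 1) / 2 + 1) by congr 1; ring,
    show (1 + α) / 2 = (α - 1) / 2 + 1 by ring]
  simp only [rpow_add_one hs0.ne', rpow_add hs0]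
  field_simp
  ring

lemma tendsto_halfLineBoundary_one (hα : α < 2) :
    Tendsto (halfLineBoundary α) (𝓝[<] 1) (𝓝 0) := by
  have hslope (p : ℝ) : Tendsto (slope (fun t : ℝ => t ^ p) 1) (𝓝[<] 1) (𝓝 (p * 1 ^ (p - 1))) :=
    (hasDerivAt_iff_tendsto_slope.1 (hasDerivAt_rpow_const (Or.inl one_ne_zero))).mono_left
      (nhdsWithin_mono _ fun _ h => ne_of_lt (mem_Iio.1 h))
  have hid : Tendsto (fun s : ℝ => s) (𝓝[<] 1) (𝓝 1) := nhdsWithin_le_nhds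
  have hpow : Tendsto (fun s : ℝ => (1 - s) ^ (2 - α)) (𝓝[<] 1) (𝓝 0) := by
    have h := (hid.const_sub 1).rpow_const (p := 2 - α) (Or.inr (sub_nonneg.2 hα.le))
    rwa [sub_self, zero_rpow (sub_pos.2 hα).ne'] at h
  have hlim := hpow.mul ((hid.mul ((hslope ((α - 1) / 2)).pow 2)).add (hslope ((1 + α) / 2)))
  rw [zero_mul] at hlim
  refine hlim.congr' ?_
  filter_upwards [Ioo_mem_nhdsLT one_pos] with s hs
  exact (halfLineBoundary_eq_slope hs.1 hs.2).symm

lemma halfLineBoundary_zero (hα : 0 < α) : halfLineBoundary α 0 = 1 := by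
  simp [halfLineBoundary, zero_rpow hα.ne', zero_rpow (show (1 + α) / 2 ≠ 0 by positivity)]

lemma halfLineBoundary_one : halfLineBoundary α 1 = 0 := by
  norm_num [halfLineBoundary]

lemma continuousOn_halfLineBoundary (hα0 : 0 < α) (hα2 : α < 2) :
    ContinuousOn (halfLineBoundary α) (Icc 0 1) := by
  intro s hs
  rcases hs.2.lt_or_eq with hs1 | rfl
  · have h1s : 1 - s ≠ 0 := (sub_pos.2 hs1).ne'
    have hpow {p : ℝ} (hp : 0 ≤ p) : ContinuousAt (fun t : ℝ => t ^ p) s :=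
      continuousAt_id.rpow_const (Or.inr hp)
    have hpow' : ContinuousAt (fun t : ℝ => (1 - t) ^ (-α)) s :=
      ContinuousAt.rpow_const (by fun_prop) (Or.inl h1s)
    exact (hpow'.mul ((continuousAt_const.add (hpow hα0.le)).sub
      ((by fun_prop : ContinuousAt (fun t : ℝ => 3 - t) s).mul
        (hpow (by positivity))))).continuousWithinAt
  · rw [← Ico_insert_right zero_le_one, continuousWithinAt_insert_self, ContinuousWithinAt,
      halfLineBoundary_one]
    exact (tendsto_halfLineBoundary_one hα2).mono_left (nhdsWithin_mono _ fun _ h => h.2)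

lemma integral_rpow_mul_one_sub_rpow_half (hα0 : 0 < α) (hα2 : α < 2) :
    ∫ s in (0 : ℝ)..1, s ^ ((α - 1) / 2) * (1 - s) ^ (1 - α) =
      ProbabilityTheory.beta ((1 + α) / 2) (2 - α) := by
  rw [← integral_rpow_mul_one_sub_rpow (by linarith) (by linarith),
    show (1 + α) / 2 - 1 = (α - 1) / 2 by ring, show 2 - α - 1 = 1 - α by ring]

lemma intervalIntegrable_rpow_mul_one_sub_rpow_half (hα0 : 0 < α) (hα2 : α < 2) :
    IntervalIntegrable (fun s : ℝ => s ^ ((α - 1) / 2) * (1 - s) ^ (1 - α)) volume 0 1 := by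
  refine intervalIntegral.intervalIntegrable_of_integral_ne_zero ?_
  rw [integral_rpow_mul_one_sub_rpow_half hα0 hα2]
  exact (ProbabilityTheory.beta_pos (by linarith) (by linarith)).ne'

lemma intervalIntegrable_groundStateDefect (hα0 : 0 < α) (hα2 : α < 2) :
    IntervalIntegrable (groundStateDefect α) volume 0 1 := by
  have hbeta := intervalIntegrable_rpow_mul_one_sub_rpow_half hα0 hα2
  set b : ℝ → ℝ := fun s => s ^ ((α - 1) / 2) * (1 - s) ^ (1 - α)
  have hprim : ∀ s ∈ Ioo (0 : ℝ) 1, HasDerivAt (fun t => ∫ r in (0 : ℝ)..t, b r) (b s) s := by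
    intro s hs
    have h1s : 1 - s ≠ 0 := (sub_pos.2 hs.2).ne'
    refine intervalIntegral.integral_hasDerivAt_right (hbeta.mono_set ?_)
      (by fun_prop : Measurable b).stronglyMeasurable.stronglyMeasurableAtFilter
      ((continuousAt_id.rpow_const (Or.inl hs.1.ne')).mul
        (ContinuousAt.rpow_const (by fun_prop) (Or.inl h1s)))
    exact uIcc_subset_uIcc left_mem_uIcc (by rw [uIcc_of_le zero_le_one]; exact ⟨hs.1.le, hs.2.le⟩)
  have hcont : ContinuousOn
      (fun t => halfLineBoundary α t + (3 - α) / 2 * ∫ r in (0 : ℝ)..t, b r) (Icc 0 1) := by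
    refine (continuousOn_halfLineBoundary hα0 hα2).add (continuousOn_const.mul ?_)
    rw [← uIcc_of_le zero_le_one]
    exact intervalIntegral.continuousOn_primitive_interval' hbeta left_mem_uIcc
  have hderiv : ∀ s ∈ Ioo (0 : ℝ) 1, HasDerivAt
      (fun t => halfLineBoundary α t + (3 - α) / 2 * ∫ r in (0 : ℝ)..t, b r)
      (α * groundStateDefect α s) s := fun s hs =>
    ((hasDerivAt_halfLineBoundary hs.1 hs.2).add ((hprim s hs).const_mul _)).congr_deriv
      (sub_add_cancel _ _)
  have hnonneg : ∀ s ∈ Ioo (0 : ℝ) 1, 0 ≤ α * groundStateDefect α s := fun s hs =>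
    mul_nonneg hα0.le (groundStateDefect_nonneg hs.2.le)
  have hint := (intervalIntegrable_iff_integrableOn_Ioc_of_le zero_le_one).2
    (intervalIntegral.integrableOn_deriv_of_nonneg hcont hderiv hnonneg)
  simpa only [inv_mul_cancel_left₀ hα0.ne'] using hint.const_mul α⁻¹

lemma integral_groundStateDefect (hα0 : 0 < α) (hα2 : α < 2) :
    ∫ s in (0 : ℝ)..1, groundStateDefect α s =
      (3 - α) / (2 * α) * ProbabilityTheory.beta ((1 + α) / 2) (2 - α) - 1 / α := by
  have hsq := (intervalIntegrable_groundStateDefect hα0 hα2).const_mul α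
  have hbeta := (intervalIntegrable_rpow_mul_one_sub_rpow_half hα0 hα2).const_mul ((3 - α) / 2)
  have hparts := intervalIntegral.integral_eq_sub_of_hasDerivAt_of_le zero_le_one
    (continuousOn_halfLineBoundary hα0 hα2)
    (fun s hs => hasDerivAt_halfLineBoundary hs.1 hs.2) (hsq.sub hbeta)
  rw [intervalIntegral.integral_sub hsq hbeta, intervalIntegral.integral_const_mul,
    intervalIntegral.integral_const_mul, integral_rpow_mul_one_sub_rpow_half hα0 hα2,
    halfLineBoundary_one, halfLineBoundary_zero hα0] at hparts
  field_simp
  linarith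

lemma halfLineConst_nonneg (hα : 0 < α) : 0 ≤ halfLineConst α :=
  add_nonneg (by positivity) (intervalIntegral.integral_nonneg zero_le_one fun _ hs =>
    groundStateDefect_nonneg hs.2)

lemma halfLineConst_eq (hα0 : 0 < α) (hα2 : α < 2) :
    halfLineConst α = 2 ^ (-α) * |Gamma (-α / 2)| * Gamma ((1 + α) / 2) / √π := by
  have hrec_one : Gamma (1 - α / 2) = -α / 2 * Gamma (-α / 2) := by
    rw [← Gamma_add_one (by linarith)]
    congr 1
    ring
  have hrec : Gamma ((5 - α) / 2) = (3 - α) / 2 * Gamma ((3 - α) / 2) := by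
    rw [← Gamma_add_one (by linarith)]
    congr 1
    ring
  have hdup : Gamma (1 - α / 2) * Gamma ((3 - α) / 2) = Gamma (2 - α) * 2 ^ (α - 1) * √π := by
    have h := Gamma_mul_Gamma_add_half (1 - α / 2)
    ring_nf at h ⊢
    exact h
  have hneg : |Gamma (-α / 2)| = 2 / α * Gamma (1 - α / 2) := by
    have hpos : 0 < Gamma (1 - α / 2) := Gamma_pos_of_pos (by linarith)
    rw [hrec_one, abs_of_neg (by nlinarith)]
    field_simp
  have hΓ : 0 < Gamma ((3 - α) / 2) := Gamma_pos_of_pos (by linarith)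
  have hpow : (2 : ℝ) ^ (α - 1) * 2 ^ (-α) = 1 / 2 := by
    rw [← rpow_add two_pos, show α - 1 + -α = -1 by ring, rpow_neg_one, one_div]
  have := sqrt_pos.2 pi_pos
  have h3 : 3 - α ≠ 0 := by linarith
  rw [halfLineConst, integral_groundStateDefect hα0 hα2, ProbabilityTheory.beta,
    show (1 + α) / 2 + (2 - α) = (5 - α) / 2 by ring, hrec, hneg, eq_div_of_mul_eq hΓ.ne' hdup]
  rw [show (2 : ℝ) ^ (-α) = 1 / 2 / 2 ^ (α - 1) by rw [← hpow]; field_simp]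
  field_simp
  ring

end HalfLineConstant

section Slicing

variable {d : ℕ} {α : ℝ}

lemma lintegral_eq_lintegral_lintegral_insertNth (i : Fin (d + 1))
    {f : EuclideanSpace ℝ (Fin (d + 1)) → ℝ≥0∞} (hf : Measurable f) :
    ∫⁻ y, f y = ∫⁻ t : ℝ, ∫⁻ v : EuclideanSpace ℝ (Fin d),
      f (WithLp.toLp 2 (i.insertNth (α := fun _ => ℝ) t v.ofLp)) := by
  have hsplit := (volume_preserving_piFinSuccAbove (fun _ : Fin (d + 1) => ℝ) i).symm
  have htoLp : Measurable fun z : Fin (d + 1) → ℝ => f (WithLp.toLp 2 z) := by fun_prop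
  have hf' : Measurable fun z : ℝ × (Fin d → ℝ) => f (WithLp.toLp 2
      ((MeasurableEquiv.piFinSuccAbove (fun _ : Fin (d + 1) => ℝ) i).symm z)) :=
    htoLp.comp (MeasurableEquiv.measurable _)
  rw [← (PiLp.volume_preserving_toLp (Fin (d + 1))).lintegral_comp hf,
    ← hsplit.lintegral_comp htoLp, Measure.volume_eq_prod,
    lintegral_prod _ hf'.aemeasurable]
  refine lintegral_congr fun t => ?_
  exact ((PiLp.volume_preserving_ofLp (Fin d)).lintegral_comp (hf'.comp (by fun_prop))).symm

lemma sq_norm_sub_insertNth (i : Fin (d + 1)) (x : EuclideanSpace ℝ (Fin (d + 1))) (t : ℝ)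
    (v : EuclideanSpace ℝ (Fin d)) :
    ‖x - WithLp.toLp 2 (i.insertNth (α := fun _ => ℝ) t v.ofLp)‖ ^ 2 =
      (x i - t) ^ 2 + ‖WithLp.toLp 2 (i.removeNth x.ofLp) - v‖ ^ 2 := by
  simp [EuclideanSpace.norm_sq_eq, Fin.sum_univ_succAbove _ i, Fin.removeNth]

/-- The kernel `|x - y| ^ (-(n + α))` of the fractional Laplacian of order `α` on an
`n`-dimensional space. On the diagonal it takes the junk value `0`. -/
noncomputable def fracKernel {E : Type*} [NormedAddCommGroup E] [NormedSpace ℝ E] (α : ℝ)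
    (x y : E) : ℝ≥0∞ :=
  ENNReal.ofReal (‖x - y‖ ^ (-(finrank ℝ E + α)))

lemma fracKernel_comm {E : Type*} [NormedAddCommGroup E] [NormedSpace ℝ E] (x y : E) :
    fracKernel α x y = fracKernel α y x := by
  rw [fracKernel, norm_sub_rev, fracKernel]

@[fun_prop]
lemma measurable_fracKernel {X E : Type*} [MeasurableSpace X] [NormedAddCommGroup E]
    [NormedSpace ℝ E] [MeasurableSpace E] [BorelSpace E] [SecondCountableTopology E] {f g : X → E}
    (hf : Measurable f) (hg : Measurable g) : Measurable fun z => fracKernel α (f z) (g z) := by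
  unfold fracKernel
  fun_prop

/-- The factor by which integrating out `d` coordinates turns the fractional kernel of order `α`
on `ℝ^{d+1}` into the one on `ℝ`. -/
noncomputable def sliceConst (d : ℕ) (α : ℝ) : ℝ :=
  π ^ (d / 2 : ℝ) * Gamma ((1 + α) / 2) / Gamma ((d + 1 + α) / 2)

lemma sliceConst_pos (d : ℕ) (hα : 0 < α) : 0 < sliceConst d α := by
  have := Gamma_pos_of_pos (show 0 < (1 + α) / 2 by positivity)
  have := Gamma_pos_of_pos (show 0 < (d + 1 + α) / 2 by positivity)
  unfold sliceConst
  positivity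

lemma lintegral_fracKernel_insertNth (hα : 0 < α) (i : Fin (d + 1))
    (x : EuclideanSpace ℝ (Fin (d + 1))) {t : ℝ} (ht : t ≠ x i) :
    ∫⁻ v : EuclideanSpace ℝ (Fin d),
        fracKernel α x (WithLp.toLp 2 (i.insertNth (α := fun _ => ℝ) t v.ofLp)) =
      ENNReal.ofReal (sliceConst d α) * ENNReal.ofReal (|x i - t| ^ (-(1 + α))) := by
  have hA : 0 < (x i - t) ^ 2 := by
    have := sub_ne_zero.2 ht.symm
    positivity
  have hkernel : ∀ v : EuclideanSpace ℝ (Fin d),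
      fracKernel α x (WithLp.toLp 2 (i.insertNth (α := fun _ => ℝ) t v.ofLp)) = ENNReal.ofReal
        (((x i - t) ^ 2 + ‖WithLp.toLp 2 (i.removeNth x.ofLp) - v‖ ^ 2) ^
          (-((d + 1 + α) / 2))) := by
    intro v
    rw [← sq_norm_sub_insertNth, ← rpow_two, ← rpow_mul (norm_nonneg _), fracKernel,
      finrank_euclideanSpace_fin]
    push_cast
    ring_nf
  simp_rw [hkernel]
  rw [lintegral_sub_left_eq_self (fun v : EuclideanSpace ℝ (Fin d) =>
      ENNReal.ofReal (((x i - t) ^ 2 + ‖v‖ ^ 2) ^ (-((d + 1 + α) / 2)))),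
    lintegral_add_sq_norm_rpow_neg hA (by rw [finrank_euclideanSpace_fin]; linarith),
    finrank_euclideanSpace_fin, show (d + 1 + α) / 2 - d / 2 = (1 + α) / 2 by ring,
    show d / 2 - (d + 1 + α) / 2 = -(1 + α) / 2 by ring,
    ← ENNReal.ofReal_mul (sliceConst_pos d hα).le, sliceConst, ← sq_abs, ← rpow_two,
    ← rpow_mul (abs_nonneg _), mul_div_cancel₀ _ two_ne_zero]

lemma lintegral_coord_mul_fracKernel (hα : 0 < α) (i : Fin (d + 1))
    (x : EuclideanSpace ℝ (Fin (d + 1))) {h : ℝ → ℝ≥0∞} (hh : Measurable h) :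
    ∫⁻ y, h (y i) * fracKernel α x y =
      ENNReal.ofReal (sliceConst d α) * ∫⁻ t, h t * ENNReal.ofReal (|x i - t| ^ (-(1 + α))) := by
  rw [lintegral_eq_lintegral_lintegral_insertNth i (by fun_prop),
    ← lintegral_const_mul _ (by fun_prop)]
  refine lintegral_congr_ae ?_
  filter_upwards [Measure.ae_ne volume (x i)] with t ht
  simp only [Fin.insertNth_apply_same]
  rw [lintegral_const_mul _ (by fun_prop),
    lintegral_fracKernel_insertNth hα i x ht, mul_left_comm]

end Slicing

section GroundState

variable {d : ℕ} {α q : ℝ} {S : Set ℝ}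

/-- The ratio `s ^ q` of the values of the profile `t ^ q` at two heights of ratio `s`, cut off to
the ratios in `S`. -/
noncomputable def ratioWeight (q : ℝ) (S : Set ℝ) : ℝ → ℝ≥0∞ :=
  S.indicator fun s => ENNReal.ofReal (s ^ q)

lemma measurable_ratioWeight (hS : MeasurableSet S) : Measurable (ratioWeight q S) :=
  Measurable.indicator (by fun_prop) hS

lemma lintegral_ratioWeight_mul (hS : MeasurableSet S) :
    ∫⁻ s, ratioWeight q S s * ENNReal.ofReal (|1 - s| ^ (-(1 + α))) = ratioMoment α q S := by
  rw [ratioMoment, ← lintegral_indicator hS]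
  refine lintegral_congr fun s => ?_
  by_cases hs : s ∈ S
  · simp only [ratioWeight, indicator_of_mem hs, ENNReal.ofReal_mul' (show 0 ≤ |1 - s| ^ (-(1 + α))
      by positivity)]
  · simp only [ratioWeight, indicator_of_notMem hs, zero_mul]

lemma lintegral_ratioWeight_mul_fracKernel (hα : 0 < α) (hS : MeasurableSet S) (i : Fin (d + 1))
    {x : EuclideanSpace ℝ (Fin (d + 1))} (hx : 0 < x i) :
    ∫⁻ y, ratioWeight q S (y i / x i) * fracKernel α x y =
      ENNReal.ofReal (sliceConst d α) * ratioMoment α q S * ENNReal.ofReal (x i ^ (-α)) := by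
  have hw := measurable_ratioWeight (q := q) hS
  rw [lintegral_coord_mul_fracKernel hα i x (h := fun t => ratioWeight q S (t / x i)) (by fun_prop),
    lintegral_comp_div_mul_abs_sub_rpow hw α hx, lintegral_ratioWeight_mul hS]
  ring

/-- The Gagliardo energy `∬ (u x - u y)² |x - y| ^ (-(n + α)) dx dy` as an extended real. -/
noncomputable def gagliardoEnergy {E : Type*} [NormedAddCommGroup E] [NormedSpace ℝ E]
    [MeasureSpace E] (α : ℝ) (u : E → ℝ) : ℝ≥0∞ :=
  ∫⁻ x, ∫⁻ y, ENNReal.ofReal ((u x - u y) ^ 2) * fracKernel α x y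

/-- The weighted mass `∫ u² x_d ^ (-α)` as an extended real. It is only used for functions that
vanish off the half-space; at nonpositive heights the power has a junk value. -/
noncomputable def hardyMass (α : ℝ) (u : EuclideanSpace ℝ (Fin (d + 1)) → ℝ) : ℝ≥0∞ :=
  ∫⁻ x, ENNReal.ofReal (u x ^ 2) * ENNReal.ofReal (x (Fin.last d) ^ (-α))

variable {u : EuclideanSpace ℝ (Fin (d + 1)) → ℝ}

lemma lintegral_sq_mul_ratioWeight (hα : 0 < α) (hS : MeasurableSet S) (hu : Measurable u)
    (hu0 : ∀ x ∉ halfSpace d, u x = 0) :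
    ∫⁻ x, ∫⁻ y, ENNReal.ofReal (u x ^ 2) * ratioWeight q S (y (Fin.last d) / x (Fin.last d)) *
        fracKernel α x y =
      ENNReal.ofReal (sliceConst d α) * ratioMoment α q S * hardyMass α u := by
  have hw := measurable_ratioWeight (q := q) hS
  rw [hardyMass, ← lintegral_const_mul _ (by fun_prop)]
  refine lintegral_congr fun x => ?_
  by_cases hx : x ∈ halfSpace d
  · simp_rw [mul_assoc (ENNReal.ofReal (u x ^ 2))]
    rw [lintegral_const_mul _ (by fun_prop), lintegral_ratioWeight_mul_fracKernel hα hS _ hx,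
      mul_left_comm]
  · simp [hu0 x hx]

lemma lintegral_sq_mul_ratioWeight_symm (hα : 0 < α) (hS : MeasurableSet S) (hu : Measurable u)
    (hu0 : ∀ x ∉ halfSpace d, u x = 0) :
    ∫⁻ x, ∫⁻ y, (ENNReal.ofReal (u x ^ 2) * ratioWeight q S (y (Fin.last d) / x (Fin.last d)) +
        ENNReal.ofReal (u y ^ 2) * ratioWeight q S (x (Fin.last d) / y (Fin.last d))) *
          fracKernel α x y =
      2 * (ENNReal.ofReal (sliceConst d α) * ratioMoment α q S * hardyMass α u) := by
  have hw := measurable_ratioWeight (q := q) hS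
  simp_rw [add_mul]
  rw [lintegral_congr fun x => lintegral_add_left (by fun_prop) _, lintegral_add_left (by fun_prop),
    lintegral_sq_mul_ratioWeight hα hS hu hu0, lintegral_lintegral_swap
      (by unfold Function.uncurry; fun_prop)]
  simp_rw [fracKernel_comm (α := α)]
  rw [lintegral_sq_mul_ratioWeight hα hS hu hu0, two_mul]

lemma sq_add_sq_le_sq_sub_add {a b r : ℝ} (hr : 0 < r) (p : ℝ) :
    a ^ 2 + b ^ 2 ≤ (a - b) ^ 2 + (a ^ 2 * r ^ p + b ^ 2 * r⁻¹ ^ p) := by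
  have : 0 < r ^ p := by positivity
  have hsq : 0 ≤ (a * r ^ p - b) ^ 2 / r ^ p := by positivity
  have hexpand : (a * r ^ p - b) ^ 2 / r ^ p = a ^ 2 * r ^ p + b ^ 2 * r⁻¹ ^ p - 2 * a * b := by
    rw [inv_rpow hr.le]
    field_simp
    ring
  linarith

lemma sq_mul_ratioWeight_add_le (hS : ∀ s, s⁻¹ ∈ S ↔ s ∈ S) {a b X Y : ℝ} (ha : X ≤ 0 → a = 0)
    (hb : Y ≤ 0 → b = 0) (p : ℝ) :
    ENNReal.ofReal (a ^ 2) * ratioWeight 0 S (Y / X) +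
        ENNReal.ofReal (b ^ 2) * ratioWeight 0 S (X / Y) ≤
      ENNReal.ofReal ((a - b) ^ 2) +
        (ENNReal.ofReal (a ^ 2) * ratioWeight p (S ∩ Ioi 0) (Y / X) +
          ENNReal.ofReal (b ^ 2) * ratioWeight p (S ∩ Ioi 0) (X / Y)) := by
  have hXY : X / Y ∈ S ↔ Y / X ∈ S := by rw [← inv_div, hS]
  have hle_one (s : ℝ) : ratioWeight 0 S s ≤ 1 :=
    indicator_apply_le' (fun _ => by simp) fun _ => zero_le_one
  by_cases hYX : Y / X ∈ S; swap
  · simp [ratioWeight, hYX, hXY]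
  rcases le_or_gt X 0 with hX | hX
  · rw [ha hX]
    simpa using (mul_le_of_le_one_right' (hle_one _)).trans le_self_add
  rcases le_or_gt Y 0 with hY | hY
  · rw [hb hY]
    simpa using (mul_le_of_le_one_right' (hle_one _)).trans le_self_add
  have hr : 0 < Y / X := by positivity
  have hr' : 0 < X / Y := by positivity
  have hineq := sq_add_sq_le_sq_sub_add (a := a) (b := b) hr p
  rw [inv_div] at hineq
  simp only [ratioWeight, indicator_of_mem hYX, indicator_of_mem (hXY.2 hYX),
    indicator_of_mem (show Y / X ∈ S ∩ Ioi 0 from ⟨hYX, hr⟩),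
    indicator_of_mem (show X / Y ∈ S ∩ Ioi 0 from ⟨hXY.2 hYX, hr'⟩), rpow_zero, ENNReal.ofReal_one,
    mul_one]
  rw [← ENNReal.ofReal_mul (by positivity), ← ENNReal.ofReal_mul (by positivity),
    ← ENNReal.ofReal_add (by positivity) (by positivity),
    ← ENNReal.ofReal_add (by positivity) (by positivity),
    ← ENNReal.ofReal_add (by positivity) (by positivity)]
  exact ENNReal.ofReal_le_ofReal hineq

lemma two_mul_ratioMoment_zero_mul_hardyMass_le (hα : 0 < α) (hS : MeasurableSet S)
    (hSinv : ∀ s, s⁻¹ ∈ S ↔ s ∈ S) (hu : Measurable u) (hu0 : ∀ x ∉ halfSpace d, u x = 0) (p : ℝ) :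
    2 * (ENNReal.ofReal (sliceConst d α) * ratioMoment α 0 S * hardyMass α u) ≤
      gagliardoEnergy α u +
        2 * (ENNReal.ofReal (sliceConst d α) * ratioMoment α p (S ∩ Ioi 0) * hardyMass α u) := by
  have := measurable_ratioWeight (q := 0) hS
  have := measurable_ratioWeight (q := p) (hS.inter (measurableSet_Ioi (a := 0)))
  rw [← lintegral_sq_mul_ratioWeight_symm hα hS hu hu0,
    ← lintegral_sq_mul_ratioWeight_symm hα (hS.inter measurableSet_Ioi) hu hu0, gagliardoEnergy,
    ← lintegral_add_left (by fun_prop)]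
  refine lintegral_mono fun x => ?_
  rw [← lintegral_add_left (by fun_prop)]
  refine lintegral_mono fun y => ?_
  rw [← add_mul]
  exact mul_le_mul_left (sq_mul_ratioWeight_add_le hSinv (fun hx => hu0 x hx.not_gt)
    (fun hy => hu0 y hy.not_gt) p) _

end GroundState

section ExtendedHardy

variable {d : ℕ} {α δ : ℝ} {u : EuclideanSpace ℝ (Fin (d + 1)) → ℝ}

lemma hardyMass_ne_top (hα : 0 < α) (hu : Measurable u) (hu0 : ∀ x ∉ halfSpace d, u x = 0)
    (hI : gagliardoEnergy α u ≠ ∞) : hardyMass α u ≠ ∞ := by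
  have hle := two_mul_ratioMoment_zero_mul_hardyMass_le hα measurableSet_Iic
    (fun s => inv_nonpos (a := s)) hu hu0 0
  have hempty : ratioMoment α 0 ∅ = 0 := setLIntegral_empty _
  rw [Iic_inter_Ioi, Ioc_self, hempty, mul_zero, zero_mul, mul_zero, add_zero,
    ratioMoment_zero_Iic hα] at hle
  have hκ : ENNReal.ofReal (sliceConst d α) * ENNReal.ofReal (1 / α) ≠ 0 :=
    mul_ne_zero (ENNReal.ofReal_pos.2 (sliceConst_pos d hα)).ne'
      (ENNReal.ofReal_pos.2 (by positivity)).ne'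
  intro hM
  rw [hM, ENNReal.mul_top hκ, ENNReal.mul_top two_ne_zero] at hle
  exact hI (top_le_iff.1 hle)

lemma inv_mem_Iio_union_Ioi_inv_iff (hδ0 : 0 < δ) (s : ℝ) :
    s⁻¹ ∈ Iio δ ∪ Ioi δ⁻¹ ↔ s ∈ Iio δ ∪ Ioi δ⁻¹ := by
  have himp : ∀ r ∈ Iio δ ∪ Ioi δ⁻¹, r⁻¹ ∈ Iio δ ∪ Ioi δ⁻¹ := by
    rintro r (hr | hr)
    · rcases le_or_gt r 0 with hr0 | hr0
      · exact Or.inl ((inv_nonpos.2 hr0).trans_lt hδ0)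
      · exact Or.inr (inv_strictAnti₀ hr0 hr)
    · exact Or.inl (inv_lt_of_inv_lt₀ hδ0 hr)
  exact ⟨fun hs => inv_inv s ▸ himp _ hs, himp s⟩

lemma truncated_hardy_le (hα : 0 < α) (hδ0 : 0 < δ) (hδ1 : δ < 1) (hu : Measurable u)
    (hu0 : ∀ x ∉ halfSpace d, u x = 0) :
    2 * (ENNReal.ofReal (sliceConst d α) * (ENNReal.ofReal (1 / α) +
        ∫⁻ s in Ioo 0 δ, ENNReal.ofReal (groundStateDefect α s)) *
          hardyMass α u) ≤ gagliardoEnergy α u := by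
  rcases eq_or_ne (gagliardoEnergy α u) ∞ with hI | hI
  · exact hI ▸ le_top
  have hpos : (Iio δ ∪ Ioi δ⁻¹) ∩ Ioi 0 = Ioo 0 δ ∪ Ioi δ⁻¹ := by
    rw [union_inter_distrib_right, Iio_inter_Ioi, Ioi_inter_Ioi, sup_of_le_left (by positivity)]
  have hle := two_mul_ratioMoment_zero_mul_hardyMass_le hα
    (measurableSet_Iio.union measurableSet_Ioi) (inv_mem_Iio_union_Ioi_inv_iff hδ0) hu hu0
    ((α - 1) / 2)
  have hfin : 2 * (ENNReal.ofReal (sliceConst d α) *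
      ratioMoment α ((α - 1) / 2) (Ioo 0 δ ∪ Ioi δ⁻¹) * hardyMass α u) ≠ ∞ :=
    ENNReal.mul_ne_top ENNReal.ofNat_ne_top (ENNReal.mul_ne_top (ENNReal.mul_ne_top
      ENNReal.ofReal_ne_top (ratioMoment_Ioo_union_Ioi_inv_ne_top (by linarith) (by linarith)
        hδ0 hδ1)) (hardyMass_ne_top hα hu hu0 hI))
  rw [hpos, ratioMoment_zero_eq_add_groundStateDefect hα hδ0 hδ1.le, mul_add, add_mul, mul_add,
    add_comm] at hle
  exact (ENNReal.add_le_add_iff_right hfin).1 hle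

lemma ofReal_inv_add_lintegral_groundStateDefect (hα0 : 0 < α) (hα2 : α < 2) (hδ0 : 0 < δ)
    (hδ1 : δ < 1) :
    ENNReal.ofReal (1 / α) +
        ∫⁻ s in Ioo 0 δ, ENNReal.ofReal (groundStateDefect α s) =
      ENNReal.ofReal (1 / α +
        ∫ s in (0 : ℝ)..δ, groundStateDefect α s) := by
  have hint : IntegrableOn (groundStateDefect α) (Ioo 0 δ) :=
    ((intervalIntegrable_iff_integrableOn_Ioo_of_le zero_le_one).1
      (intervalIntegrable_groundStateDefect hα0 hα2)).mono_set (Ioo_subset_Ioo_right hδ1.le)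
  have hnonneg : ∀ s ∈ Ioo 0 δ, 0 ≤ groundStateDefect α s := fun s hs =>
    groundStateDefect_nonneg (hs.2.le.trans hδ1.le)
  rw [intervalIntegral.integral_of_le hδ0.le, integral_Ioc_eq_integral_Ioo,
    ENNReal.ofReal_add (by positivity) (setIntegral_nonneg measurableSet_Ioo hnonneg),
    ofReal_integral_eq_lintegral_ofReal hint
      ((ae_restrict_iff' measurableSet_Ioo).2 (ae_of_all _ hnonneg))]

lemma tendsto_inv_add_integral_groundStateDefect (hα0 : 0 < α) (hα2 : α < 2) :
    Tendsto (fun δ : ℝ => 1 / α +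
        ∫ s in (0 : ℝ)..δ, groundStateDefect α s)
      (𝓝[<] 1) (𝓝 (halfLineConst α)) := by
  have hcont := intervalIntegral.continuousOn_primitive_interval'
    (intervalIntegrable_groundStateDefect hα0 hα2) left_mem_uIcc
  rw [uIcc_of_le zero_le_one] at hcont
  rw [← nhdsWithin_Ioo_eq_nhdsLT zero_lt_one]
  exact ((hcont 1 (right_mem_Icc.2 zero_le_one)).mono Ioo_subset_Icc_self).const_add _

theorem two_mul_hardyMass_le_gagliardoEnergy (hα0 : 0 < α) (hα2 : α < 2) (hu : Measurable u)
    (hu0 : ∀ x ∉ halfSpace d, u x = 0) :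
    2 * (ENNReal.ofReal (sliceConst d α) * ENNReal.ofReal (halfLineConst α) * hardyMass α u) ≤
      gagliardoEnergy α u := by
  rcases eq_or_ne (gagliardoEnergy α u) ∞ with hI | hI
  · exact hI ▸ le_top
  have hM := hardyMass_ne_top hα0 hu hu0 hI
  have hlim := ENNReal.Tendsto.const_mul (ENNReal.Tendsto.mul_const (ENNReal.Tendsto.const_mul
    (ENNReal.tendsto_ofReal (tendsto_inv_add_integral_groundStateDefect hα0 hα2))
    (Or.inr (ENNReal.ofReal_ne_top (r := sliceConst d α)))) (Or.inr hM))
    (Or.inr (ENNReal.ofNat_ne_top (n := 2)))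
  refine le_of_tendsto hlim ?_
  filter_upwards [Ioo_mem_nhdsLT zero_lt_one] with δ hδ
  rw [← ofReal_inv_add_lintegral_groundStateDefect hα0 hα2 hδ.1 hδ.2]
  exact truncated_hardy_le hα0 hδ.1 hδ.2 hu hu0

end ExtendedHardy

section EnergyIntegrable

variable {E : Type*} [NormedAddCommGroup E] {α : ℝ} {u : E → ℝ} {L : ℝ≥0}

lemma sq_sub_le_of_lipschitzWith_of_bounded (hL : LipschitzWith L u) {M : ℝ}
    (hM : ∀ x, ‖u x‖ ≤ M) (x y : E) :
    (u x - u y) ^ 2 ≤ (L ^ 2 + (2 * M) ^ 2) * min 1 (‖x - y‖ ^ 2) := by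
  have hlip : ‖u x - u y‖ ≤ L * ‖x - y‖ := hL.norm_sub_le x y
  have hbdd : ‖u x - u y‖ ≤ 2 * M := by linarith [norm_sub_le (u x) (u y), hM x, hM y]
  rw [← sq_abs, ← norm_eq_abs]
  rcases min_choice 1 (‖x - y‖ ^ 2) with hmin | hmin <;> rw [hmin]
  · nlinarith [pow_le_pow_left₀ (norm_nonneg _) hbdd 2, sq_nonneg (L : ℝ)]
  · have hsq := pow_le_pow_left₀ (norm_nonneg _) hlip 2
    nlinarith [sq_nonneg (2 * M * ‖x - y‖)]

lemma sq_sub_le_indicator_add_mul (hL : LipschitzWith L u) {M : ℝ} (hM : ∀ x, ‖u x‖ ≤ M) (x y : E) :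
    (u x - u y) ^ 2 ≤ (L ^ 2 + (2 * M) ^ 2) *
      (((tsupport u).indicator 1 x + (tsupport u).indicator 1 y) * min 1 (‖x - y‖ ^ 2)) := by
  have hind : ∀ z, 0 ≤ (tsupport u).indicator (1 : E → ℝ) z :=
    indicator_nonneg fun _ _ => zero_le_one
  by_cases hxy : x ∈ tsupport u ∨ y ∈ tsupport u
  · have hone : 1 ≤ (tsupport u).indicator (1 : E → ℝ) x + (tsupport u).indicator 1 y := by
      rcases hxy with hx | hy
      · rw [indicator_of_mem hx]
        exact le_add_of_nonneg_right (hind y)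
      · rw [indicator_of_mem hy]
        exact le_add_of_nonneg_left (hind x)
    calc (u x - u y) ^ 2 ≤ (L ^ 2 + (2 * M) ^ 2) * min 1 (‖x - y‖ ^ 2) :=
          sq_sub_le_of_lipschitzWith_of_bounded hL hM x y
      _ ≤ _ := by
          gcongr
          exact le_mul_of_one_le_left (by positivity) hone
  · rw [not_or] at hxy
    simp [image_eq_zero_of_notMem_tsupport hxy.1, image_eq_zero_of_notMem_tsupport hxy.2, hxy]

variable [NormedSpace ℝ E] [FiniteDimensional ℝ E] [MeasurableSpace E] [BorelSpace E]

lemma integrable_min_one_sq_mul_norm_rpow [Nontrivial E] (μ : Measure E) [μ.IsAddHaarMeasure]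
    (hα0 : 0 < α) (hα2 : α < 2) :
    Integrable (fun z : E => min 1 (‖z‖ ^ 2) * ‖z‖ ^ (-(finrank ℝ E + α))) μ := by
  have hradial : ∀ r : ℝ, 0 < r →
      r ^ (finrank ℝ E - 1) * r ^ (-(finrank ℝ E + α)) = r ^ (-1 - α) := by
    intro r hr
    rw [← rpow_natCast, ← rpow_add hr, Nat.cast_pred finrank_pos]
    ring_nf
  have hnear : IntegrableOn (fun r : ℝ => r ^ (1 - α)) (Ioc 0 1) := by
    rw [← intervalIntegrable_iff_integrableOn_Ioc_of_le zero_le_one]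
    exact intervalIntegral.intervalIntegrable_rpow' (by linarith)
  have hfar : IntegrableOn (fun r : ℝ => r ^ (-1 - α)) (Ioi 1) :=
    integrableOn_Ioi_rpow_of_lt (by linarith) one_pos
  rw [integrable_fun_norm_addHaar μ (f := fun r : ℝ => min 1 (r ^ 2) * r ^ (-(finrank ℝ E + α))),
    ← Ioc_union_Ioi_eq_Ioi zero_le_one]
  refine (hnear.congr_fun (fun r hr => ?_) measurableSet_Ioc).union
    (hfar.congr_fun (fun r (hr : 1 < r) => ?_) measurableSet_Ioi)
  · have hsq : r ^ 2 ≤ 1 := pow_le_one₀ hr.1.le hr.2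
    rw [smul_eq_mul, min_eq_right hsq, mul_left_comm, hradial r hr.1, ← rpow_two,
      ← rpow_add hr.1]
    ring_nf
  · have hsq : 1 ≤ r ^ 2 := one_le_pow₀ hr.le
    rw [smul_eq_mul, min_eq_left hsq, one_mul, hradial r (one_pos.trans hr)]

lemma integrable_sq_sub_div_norm_rpow [Nontrivial E] (μ : Measure E) [μ.IsAddHaarMeasure]
    (hα0 : 0 < α) (hα2 : α < 2) (hL : LipschitzWith L u) (hcs : HasCompactSupport u) :
    Integrable (fun z : E × E => (u z.1 - u z.2) ^ 2 / ‖z.1 - z.2‖ ^ (finrank ℝ E + α))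
      (μ.prod μ) := by
  obtain ⟨M, hM⟩ := hcs.exists_bound_of_continuous hL.continuous
  have hind : Integrable ((tsupport u).indicator (1 : E → ℝ)) μ :=
    (integrable_indicator_iff (isClosed_tsupport u).measurableSet).2
      (integrableOn_const hcs.isCompact.measure_lt_top.ne)
  have hconv := hind.convolution_integrand (ContinuousLinearMap.mul ℝ ℝ)
    (integrable_min_one_sq_mul_norm_rpow μ hα0 hα2)
  have hu := hL.continuous.measurable
  refine ((hconv.swap.add hconv).const_mul (L ^ 2 + (2 * M) ^ 2 : ℝ)).mono'
    (Measurable.aestronglyMeasurable (by fun_prop)) (ae_of_all _ fun z => ?_)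
  obtain ⟨x, y⟩ := z
  rw [norm_of_nonneg (by positivity), div_eq_mul_inv, ← rpow_neg (norm_nonneg _)]
  refine (mul_le_mul_of_nonneg_right (sq_sub_le_indicator_add_mul hL hM x y)
    (by positivity)).trans_eq ?_
  simp only [ContinuousLinearMap.mul_apply', Pi.add_apply, Function.comp_apply, Prod.swap,
    norm_sub_rev y x]
  ring

end EnergyIntegrable

section Hardy

variable {d : ℕ} {α : ℝ}

lemma abs_Gamma_neg_half_pos (hα0 : 0 < α) (hα2 : α < 2) : 0 < |Gamma (-α / 2)| := by
  refine abs_pos.2 (Gamma_ne_zero fun m hm => ?_)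
  have hlt : (m : ℝ) < 1 := by linarith
  have hm0 : m = 0 := by exact_mod_cast Nat.lt_one_iff.1 (by exact_mod_cast hlt)
  rw [hm0, Nat.cast_zero] at hm
  linarith

lemma fracLapConst_pos (d : ℕ) (hα0 : 0 < α) (hα2 : α < 2) : 0 < fracLapConst d α := by
  have hΓ := abs_Gamma_neg_half_pos hα0 hα2
  have : 0 < Gamma ((d + α) / 2) := Gamma_pos_of_pos (by positivity)
  unfold fracLapConst
  positivity

lemma fracLapConst_mul_sliceConst_mul_halfLineConst (d : ℕ) (hα0 : 0 < α) (hα2 : α < 2) :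
    fracLapConst (d + 1) α * (sliceConst d α * halfLineConst α) = Gamma ((1 + α) / 2) ^ 2 / π := by
  have hΓ := abs_Gamma_neg_half_pos hα0 hα2
  have : 0 < Gamma ((d + 1 + α) / 2) := Gamma_pos_of_pos (by positivity)
  have hπ : π ^ ((d + 1) / 2 : ℝ) = π ^ (d / 2 : ℝ) * √π := by
    rw [sqrt_eq_rpow, ← rpow_add pi_pos, add_div]
  rw [halfLineConst_eq hα0 hα2, sliceConst, fracLapConst, Nat.cast_succ, hπ]
  generalize |Gamma (-α / 2)| = G at hΓ
  field_simp
  rw [sq_sqrt pi_pos.le]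

lemma gagliardoEnergy_eq_ofReal {E : Type*} [NormedAddCommGroup E] [NormedSpace ℝ E]
    [MeasureSpace E] [SFinite (volume : Measure E)] {u : E → ℝ}
    (hI : Integrable fun z : E × E => (u z.1 - u z.2) ^ 2 / ‖z.1 - z.2‖ ^ (finrank ℝ E + α)) :
    gagliardoEnergy α u =
      ENNReal.ofReal (∫ x, ∫ y, (u x - u y) ^ 2 / ‖x - y‖ ^ (finrank ℝ E + α)) := by
  rw [← integral_prod _ hI, ← Measure.volume_eq_prod, ofReal_integral_eq_lintegral_ofReal hI
    (ae_of_all _ fun z => by positivity), Measure.volume_eq_prod,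
    lintegral_prod _ hI.aestronglyMeasurable.aemeasurable.ennreal_ofReal]
  refine lintegral_congr fun x => lintegral_congr fun y => ?_
  rw [fracKernel, ← ENNReal.ofReal_mul (by positivity), rpow_neg (norm_nonneg _), div_eq_mul_inv]

lemma toReal_hardyMass {u : EuclideanSpace ℝ (Fin (d + 1)) → ℝ} (hu : Measurable u)
    (hu0 : ∀ x ∉ halfSpace d, u x = 0) :
    (hardyMass α u).toReal = ∫ x in halfSpace d, u x ^ 2 * x (Fin.last d) ^ (-α) := by
  have hnonneg : ∀ x, 0 ≤ u x ^ 2 * x (Fin.last d) ^ (-α) := fun x => by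
    by_cases hx : x ∈ halfSpace d
    · exact mul_nonneg (sq_nonneg _) (rpow_nonneg (le_of_lt hx) _)
    · simp [hu0 x hx]
  rw [setIntegral_eq_integral_of_forall_compl_eq_zero fun x hx => by simp [hu0 x hx],
    integral_eq_lintegral_of_nonneg_ae (ae_of_all _ hnonneg)
      (Measurable.aestronglyMeasurable (by fun_prop)), hardyMass]
  simp_rw [ENNReal.ofReal_mul (sq_nonneg _)]

theorem fractional_hardy_killed_general (d : ℕ) (α : ℝ) (hα0 : 0 < α) (hα2 : α < 2)
    (u : EuclideanSpace ℝ (Fin (d + 1)) → ℝ) (hu : Measurable u)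
    (hu0 : ∀ x ∉ halfSpace d, u x = 0)
    (hI : Integrable fun z : EuclideanSpace ℝ (Fin (d + 1)) × EuclideanSpace ℝ (Fin (d + 1)) =>
      (u z.1 - u z.2) ^ 2 / ‖z.1 - z.2‖ ^ ((d : ℝ) + 1 + α)) :
    (Gamma ((1 + α) / 2) ^ 2 / π) * ∫ x in halfSpace d, u x ^ 2 * x (Fin.last d) ^ (-α) ≤
      (1 / 2) * fracLapConst (d + 1) α *
        ∫ x : EuclideanSpace ℝ (Fin (d + 1)), ∫ y : EuclideanSpace ℝ (Fin (d + 1)),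
          (u x - u y) ^ 2 / ‖x - y‖ ^ ((d : ℝ) + 1 + α) := by
  set I := ∫ x : EuclideanSpace ℝ (Fin (d + 1)), ∫ y : EuclideanSpace ℝ (Fin (d + 1)),
    (u x - u y) ^ 2 / ‖x - y‖ ^ ((d : ℝ) + 1 + α)
  set M := ∫ x in halfSpace d, u x ^ 2 * x (Fin.last d) ^ (-α)
  have hdim : (finrank ℝ (EuclideanSpace ℝ (Fin (d + 1))) : ℝ) = d + 1 := by
    rw [finrank_euclideanSpace_fin, Nat.cast_succ]
  have henergy : gagliardoEnergy α u = ENNReal.ofReal I := by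
    rw [gagliardoEnergy_eq_ofReal (by rwa [hdim]), hdim]
  have hhardy : 2 * (sliceConst d α * halfLineConst α * M) ≤ I := by
    have h := ENNReal.toReal_le_of_le_ofReal (by positivity)
      ((two_mul_hardyMass_le_gagliardoEnergy hα0 hα2 hu hu0).trans_eq henergy)
    rwa [ENNReal.toReal_mul, ENNReal.toReal_mul, ENNReal.toReal_mul, toReal_hardyMass hu hu0,
      ENNReal.toReal_ofReal (sliceConst_pos d hα0).le,
      ENNReal.toReal_ofReal (halfLineConst_nonneg hα0), ENNReal.toReal_ofNat] at h
  calc Gamma ((1 + α) / 2) ^ 2 / π * M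
      = 1 / 2 * fracLapConst (d + 1) α * (2 * (sliceConst d α * halfLineConst α * M)) := by
        rw [← fracLapConst_mul_sliceConst_mul_halfLineConst d hα0 hα2]
        ring
    _ ≤ 1 / 2 * fracLapConst (d + 1) α * I := by
        have := fracLapConst_pos (d + 1) hα0 hα2
        gcongr

end Hardy

theorem fractional_hardy_killed (d : ℕ) (α : ℝ) (hα0 : 0 < α) (hα2 : α < 2)
    (u : EuclideanSpace ℝ (Fin (d + 1)) → ℝ) (hu : ContDiff ℝ (⊤ : ℕ∞) u)
    (hcs : HasCompactSupport u) (hsupp : tsupport u ⊆ halfSpace d) :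
    (Real.Gamma ((1 + α) / 2) ^ 2 / Real.pi) *
        ∫ x in halfSpace d, u x ^ 2 * x (Fin.last d) ^ (-α) ≤
      (1 / 2) * fracLapConst (d + 1) α *
        ∫ x : EuclideanSpace ℝ (Fin (d + 1)), ∫ y : EuclideanSpace ℝ (Fin (d + 1)),
          (u x - u y) ^ 2 / ‖x - y‖ ^ ((d : ℝ) + 1 + α) := by
  obtain ⟨L, hL⟩ := hu.lipschitzWith_of_hasCompactSupport hcs (by simp)
  refine fractional_hardy_killed_general d α hα0 hα2 u hu.continuous.measurable
    (fun x hx => image_eq_zero_of_notMem_tsupport fun h => hx (hsupp h)) ?_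
  have hI := integrable_sq_sub_div_norm_rpow volume hα0 hα2 hL hcs
  rwa [finrank_euclideanSpace_fin, Nat.cast_succ] at hI
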